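/- Assume moreover that ω : ℝᵈ → ℝᵈ is continuous. Then the Melnikov potential 𝓜̃ is continuous on ℝⁿ × ℝᵈ × 𝕋ᵈ × ℝ (jointly in all of its arguments). -/

import Mathlib

/-!
The integrand of the Melnikov potential is jointly continuous, and the homoclinic decay bounds it by
a sum of exponentials `exp (-lam * |τ i + σ|)`. As long as `τ` stays in a bounded set, shifting by
`τ i` costs only a constant factor, so these exponentials are dominated by a multiple of
`exp (-lam * |σ|)`, and dominated convergence applies near every point.
-/

open MeasureTheory

/-- The Melnikov potential. -/
noncomputable def melnikovPotential {n d : ℕ}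
    (p0 : Fin n → ℝ → ℝ) (q0 : Fin n → ℝ → AddCircle (1:ℝ))
    (h : (Fin n → ℝ) → (Fin n → AddCircle (1:ℝ)) → (Fin d → ℝ) →
      (Fin d → AddCircle (1:ℝ)) → ℝ → ℝ)
    (ω : (Fin d → ℝ) → Fin d → ℝ)
    (τ : Fin n → ℝ) (I : Fin d → ℝ) (φ : Fin d → AddCircle (1:ℝ)) (t : ℝ) : ℝ :=
  -∫ σ : ℝ,
    (h (fun i => p0 i (τ i + σ)) (fun i => q0 i (τ i + σ)) I
        (fun j => φ j + ((σ * ω I j : ℝ) : AddCircle (1:ℝ))) (t + σ)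
      - h 0 0 I (fun j => φ j + ((σ * ω I j : ℝ) : AddCircle (1:ℝ))) (t + σ))

lemma integrable_exp_neg_mul_abs {lam : ℝ} (hlam : 0 < lam) :
    Integrable fun σ : ℝ => Real.exp (-lam * |σ|) := by
  have hneg : IntegrableOn (fun σ : ℝ => Real.exp (-lam * |σ|)) (Set.Iic 0) :=
    (integrableOn_exp_mul_Iic hlam 0).congr_fun
      (fun σ hσ => by simp only [abs_of_nonpos (Set.mem_Iic.mp hσ), neg_mul_neg])
      measurableSet_Iic
  have hpos : IntegrableOn (fun σ : ℝ => Real.exp (-lam * |σ|)) (Set.Ioi 0) :=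
    (integrableOn_exp_mul_Ioi (neg_lt_zero.mpr hlam) 0).congr_fun
      (fun σ hσ => by simp only [abs_of_pos (Set.mem_Ioi.mp hσ)]) measurableSet_Ioi
  simpa only [Set.Iic_union_Ioi, integrableOn_univ] using hneg.union hpos

lemma exp_neg_mul_abs_add_le {lam a R : ℝ} (hlam : 0 ≤ lam) (ha : |a| ≤ R) (σ : ℝ) :
    Real.exp (-lam * |a + σ|) ≤ Real.exp (lam * R) * Real.exp (-lam * |σ|) := by
  have hσ : |σ| ≤ R + |a + σ| :=
    calc |σ| = |a + σ - a| := by rw [add_sub_cancel_left]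
      _ ≤ |a + σ| + |a| := abs_sub _ _
      _ ≤ R + |a + σ| := by linarith
  rw [← Real.exp_add, Real.exp_le_exp]
  linarith [mul_le_mul_of_nonneg_left hσ hlam]

theorem continuous_integral_of_norm_le_sum_exp {X ι E : Type*} [TopologicalSpace X]
    [FirstCountableTopology X] [Fintype ι] [NormedAddCommGroup E] [NormedSpace ℝ E]
    {F : X → ℝ → E} {a : X → ι → ℝ} {C lam : ℝ} (hlam : 0 < lam)
    (hF : Continuous (Function.uncurry F)) (ha : Continuous a)
    (hbound : ∀ x σ, ‖F x σ‖ ≤ C * ∑ i, Real.exp (-lam * |a x i + σ|)) :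
    Continuous fun x => ∫ σ, F x σ := by
  refine continuous_iff_continuousAt.mpr fun x₀ => ?_
  set R := ‖a x₀‖ + 1
  have hnear : ∀ᶠ x in nhds x₀, ‖a x‖ < R :=
    ha.norm.continuousAt.eventually_lt_const (lt_add_one _)
  have hdom : ∀ x, ‖a x‖ < R → ∀ σ,
      ‖F x σ‖ ≤ |C| * ∑ _i : ι, Real.exp (lam * R) * Real.exp (-lam * |σ|) := fun x hx σ =>
    calc ‖F x σ‖ ≤ C * ∑ i, Real.exp (-lam * |a x i + σ|) := hbound x σ
      _ ≤ |C| * ∑ i, Real.exp (-lam * |a x i + σ|) := by gcongr; exact le_abs_self C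
      _ ≤ |C| * ∑ _i : ι, Real.exp (lam * R) * Real.exp (-lam * |σ|) := by
        gcongr with i
        exact exp_neg_mul_abs_add_le hlam.le ((norm_le_pi_norm (a x) i).trans hx.le) σ
  refine continuousAt_of_dominated
    (.of_forall fun x => (hF.comp (.prodMk_right x)).aestronglyMeasurable)
    (hnear.mono fun x hx => .of_forall (hdom x hx)) ?_
    (.of_forall fun σ => (hF.comp (.prodMk_left σ)).continuousAt)
  exact (integrable_finsetSum _ fun _ _ =>
    (integrable_exp_neg_mul_abs hlam).const_mul _).const_mul _

/-- The space `ℝⁿ × ℝᵈ × 𝕋ᵈ × ℝ` of the arguments `(τ, I, φ, t)` of the Melnikov potential. -/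
abbrev MelnikovArgs (n d : ℕ) : Type :=
  (Fin n → ℝ) × (Fin d → ℝ) × (Fin d → AddCircle (1 : ℝ)) × ℝ

section Melnikov

variable {n d : ℕ} {p0 : Fin n → ℝ → ℝ} {q0 : Fin n → ℝ → AddCircle (1 : ℝ)}
  {h : (Fin n → ℝ) → (Fin n → AddCircle (1 : ℝ)) → (Fin d → ℝ) →
    (Fin d → AddCircle (1 : ℝ)) → ℝ → ℝ}
  {ω : (Fin d → ℝ) → Fin d → ℝ} {lam C0 K : ℝ}

variable (p0 q0 h ω) in
/-- The difference between `h` on the homoclinic orbits and `h` at the equilibrium, at time `σ`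
along the unperturbed flow: the integrand of `melnikovPotential`, with `(τ, I, φ, t)` packed into
one argument `x` for dominated convergence. -/
def melnikovIntegrand (x : MelnikovArgs n d) (σ : ℝ) : ℝ :=
  h (fun i => p0 i (x.1 i + σ)) (fun i => q0 i (x.1 i + σ)) x.2.1
      (fun j => x.2.2.1 j + ((σ * ω x.2.1 j : ℝ) : AddCircle (1 : ℝ))) (x.2.2.2 + σ)
    - h 0 0 x.2.1 (fun j => x.2.2.1 j + ((σ * ω x.2.1 j : ℝ) : AddCircle (1 : ℝ))) (x.2.2.2 + σ)

lemma continuous_uncurry_melnikovIntegrand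
    (hp0 : ∀ i, Continuous (p0 i)) (hq0 : ∀ i, Continuous (q0 i))
    (hcont : Continuous fun x : (Fin n → ℝ) × (Fin n → AddCircle (1 : ℝ)) × (Fin d → ℝ) ×
        (Fin d → AddCircle (1 : ℝ)) × ℝ => h x.1 x.2.1 x.2.2.1 x.2.2.2.1 x.2.2.2.2)
    (hω : Continuous ω) :
    Continuous (Function.uncurry (melnikovIntegrand p0 q0 h ω)) := by
  have hrot : Continuous fun y : MelnikovArgs n d × ℝ =>
      (y.1.2.1, (fun j => y.1.2.2.1 j + ((y.2 * ω y.1.2.1 j : ℝ) : AddCircle (1 : ℝ))),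
        y.1.2.2.2 + y.2) := by
    fun_prop
  have hpend : Continuous fun y : MelnikovArgs n d × ℝ =>
      ((fun i => p0 i (y.1.1 i + y.2)), fun i => q0 i (y.1.1 i + y.2)) := by
    fun_prop
  exact (hcont.comp (hpend.fst.prodMk (hpend.snd.prodMk hrot))).sub
    (hcont.comp (continuous_const.prodMk (continuous_const.prodMk hrot)))

lemma abs_melnikovIntegrand_le
    (hdecay : ∀ i s, |p0 i s| + dist (q0 i s) 0 ≤ C0 * Real.exp (-lam * |s|))
    (hgrowth : ∀ p q I φ t, |h p q I φ t - h 0 0 I φ t| ≤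
      K * ((∑ i, |p i|) + ∑ i, dist (q i) 0))
    (x : MelnikovArgs n d) (σ : ℝ) :
    |melnikovIntegrand p0 q0 h ω x σ| ≤ |K| * C0 * ∑ i, Real.exp (-lam * |x.1 i + σ|) :=
  calc |melnikovIntegrand p0 q0 h ω x σ|
    _ ≤ K * ((∑ i, |p0 i (x.1 i + σ)|) + ∑ i, dist (q0 i (x.1 i + σ)) 0) := hgrowth ..
    _ ≤ |K| * ((∑ i, |p0 i (x.1 i + σ)|) + ∑ i, dist (q0 i (x.1 i + σ)) 0) := by
      gcongr
      exact le_abs_self K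
    _ = |K| * ∑ i, (|p0 i (x.1 i + σ)| + dist (q0 i (x.1 i + σ)) 0) := by
      rw [Finset.sum_add_distrib]
    _ ≤ |K| * ∑ i, C0 * Real.exp (-lam * |x.1 i + σ|) := by
      gcongr with i
      exact hdecay i (x.1 i + σ)
    _ = |K| * C0 * ∑ i, Real.exp (-lam * |x.1 i + σ|) := by rw [← Finset.mul_sum, mul_assoc]

theorem melnikovPotential_continuous_general (hlam : 0 < lam)
    (hp0 : ∀ i, Continuous (p0 i)) (hq0 : ∀ i, Continuous (q0 i))
    (hdecay : ∀ i s, |p0 i s| + dist (q0 i s) 0 ≤ C0 * Real.exp (-lam * |s|))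
    (hcont : Continuous fun x : (Fin n → ℝ) × (Fin n → AddCircle (1 : ℝ)) × (Fin d → ℝ) ×
        (Fin d → AddCircle (1 : ℝ)) × ℝ => h x.1 x.2.1 x.2.2.1 x.2.2.2.1 x.2.2.2.2)
    (hgrowth : ∀ p q I φ t, |h p q I φ t - h 0 0 I φ t| ≤
      K * ((∑ i, |p i|) + ∑ i, dist (q i) 0))
    (hω : Continuous ω) :
    Continuous fun x : (Fin n → ℝ) × (Fin d → ℝ) × (Fin d → AddCircle (1 : ℝ)) × ℝ =>
      melnikovPotential p0 q0 h ω x.1 x.2.1 x.2.2.1 x.2.2.2 :=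
  (continuous_integral_of_norm_le_sum_exp hlam
    (continuous_uncurry_melnikovIntegrand hp0 hq0 hcont hω) continuous_fst
    (abs_melnikovIntegrand_le hdecay hgrowth)).neg

end Melnikov

/-- if moreover the frequency map `ω` is continuous, then the Melnikov
potential is jointly continuous in all of its arguments on `ℝⁿ × ℝᵈ × 𝕋ᵈ × ℝ`. -/
theorem melnikovPotential_continuous
    {n d : ℕ} (hn : 1 ≤ n) (hd : 1 ≤ d)
    (lam C0 K : ℝ) (hlam : 0 < lam) (hC0 : 0 < C0) (hK : 0 < K)
    (p0 : Fin n → ℝ → ℝ) (q0 : Fin n → ℝ → AddCircle (1:ℝ))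
    (hp0 : ∀ i, Continuous (p0 i)) (hq0 : ∀ i, Continuous (q0 i))
    (hdecay : ∀ i s, |p0 i s| + dist (q0 i s) 0 ≤ C0 * Real.exp (-lam * |s|))
    (h : (Fin n → ℝ) → (Fin n → AddCircle (1:ℝ)) → (Fin d → ℝ) →
      (Fin d → AddCircle (1:ℝ)) → ℝ → ℝ)
    (hcont : Continuous fun x : (Fin n → ℝ) × (Fin n → AddCircle (1:ℝ)) × (Fin d → ℝ) ×
        (Fin d → AddCircle (1:ℝ)) × ℝ => h x.1 x.2.1 x.2.2.1 x.2.2.2.1 x.2.2.2.2)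
    (hLip : ∀ p q p' q' I φ t, |h p q I φ t - h p' q' I φ t| ≤
      K * ((∑ i, |p i - p' i|) + ∑ i, dist (q i) (q' i)))
    (ω : (Fin d → ℝ) → Fin d → ℝ)
    (hω : Continuous ω) :
    Continuous fun x : (Fin n → ℝ) × (Fin d → ℝ) × (Fin d → AddCircle (1:ℝ)) × ℝ =>
      melnikovPotential p0 q0 h ω x.1 x.2.1 x.2.2.1 x.2.2.2 :=
  melnikovPotential_continuous_general hlam hp0 hq0 hdecay hcont
    (fun p q I φ t => by simpa using hLip p q 0 0 I φ t) hω
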